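/- arXiv:2105.10091 — 2 statements merged into one kernel-verified Lean document; each statement's English description precedes it below -/
import Mathlib

section
/- Let (V, ⟨·,·⟩) be a 4-dimensional real inner product space, let C be a linear map assigning to each W ∈ V an alternating trilinear form C_W on V, and define the End(V)-valued alternating 2-form D by D(W,X) = (C_W)_o(X) − (C_X)_o(W), where ⟨(C_W)_o(X)Y, Z⟩ = 2·C_W(X,Y,Z). Then for every alternating 4-linear form ν on V, with ν_o determined by ⟨ν_o(X,Y)Z, W⟩ = 2·ν(X,Y,Z,W), the 4-form tr(D∧ν_o), defined on vectors X₁,…,X₄ by (1/4)·Σ_{σ∈S₄} sgn(σ)·tr( D(X_{σ(1)},X_{σ(2)}) ∘ ν_o(X_{σ(3)},X_{σ(4)}) ), is identically zero. -/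
open RealInnerProductSpace

/-!
Summing over permutations alternates the multilinear form `X ↦ tr(D(X₀, X₁) ∘ ν_o(X₂, X₃))`, so only
its values on orthonormal bases `b` matter. There `⟪ν_o(b₂, b₃) bᵢ, bⱼ⟫` vanishes unless
`{i, j} = {0, 1}`, so the trace only sees the difference of `⟪D(b₀, b₁) b₀, b₁⟫` and
`⟪D(b₀, b₁) b₁, b₀⟫`. Both are zero: they are values of `C_{b₀}` and `C_{b₁}` on triples of vectors
from `{b₀, b₁}`.
-/

section TraceComp

variable {R M P : Type*} [CommSemiring R] [AddCommMonoid M] [Module R M]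
  [AddCommMonoid P] [Module R P]

/-- The 4-linear form `X ↦ tr(A(X₀, X₁) ∘ B(X₂, X₃))` of two bilinear maps `A`, `B` with values in
endomorphisms. Its alternatization is four times the 4-form `tr(A ∧ B)`. -/
noncomputable def traceComp (A B : M →ₗ[R] M →ₗ[R] P →ₗ[R] P) :
    MultilinearMap R (fun _ : Fin 4 => M) R :=
  MultilinearMap.mk' (fun X => LinearMap.trace R P (A (X 0) (X 1) ∘ₗ B (X 2) (X 3)))
    (fun m i x y => by
      fin_cases i <;> simp [LinearMap.add_comp, LinearMap.comp_add])
    (fun m i r x => by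
      fin_cases i <;> simp [LinearMap.smul_comp, LinearMap.comp_smul])

theorem traceComp_apply (A B : M →ₗ[R] M →ₗ[R] P →ₗ[R] P) (X : Fin 4 → M) :
    traceComp A B X = LinearMap.trace R P (A (X 0) (X 1) ∘ₗ B (X 2) (X 3)) :=
  rfl

end TraceComp

theorem trace_comp_eq_sum_inner_mul_inner {𝕜 E ι : Type*} [RCLike 𝕜] [NormedAddCommGroup E]
    [InnerProductSpace 𝕜 E] [Fintype ι] (b : OrthonormalBasis ι 𝕜 E) (S T : E →ₗ[𝕜] E) :
    LinearMap.trace 𝕜 E (S ∘ₗ T) = ∑ i, ∑ j, inner 𝕜 (b j) (T (b i)) * inner 𝕜 (b i) (S (b j)) := by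
  rw [LinearMap.trace_eq_sum_inner _ b]
  refine Finset.sum_congr rfl fun i _ => ?_
  conv_lhs => rw [LinearMap.comp_apply, ← b.sum_repr' (T (b i))]
  simp only [map_sum, map_smul, inner_sum, inner_smul_right]

section InnerProduct

variable {V : Type*} [NormedAddCommGroup V] [InnerProductSpace ℝ V]

theorem exists_bilinear_eq_of_inner_eq {M N : Type*} [AddCommMonoid M] [Module ℝ M]
    [AddCommMonoid N] [Module ℝ N] {f : M → N → V →ₗ[ℝ] V}
    (φ : M →ₗ[ℝ] N →ₗ[ℝ] V [⋀^Fin 2]→ₗ[ℝ] ℝ) (hf : ∀ x y Z W, ⟪f x y Z, W⟫ = φ x y ![Z, W]) :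
    ∃ F : M →ₗ[ℝ] N →ₗ[ℝ] V →ₗ[ℝ] V, ∀ x y, F x y = f x y := by
  refine ⟨LinearMap.mk₂ ℝ f ?_ ?_ ?_ ?_, fun _ _ => rfl⟩ <;> intros <;>
    refine LinearMap.ext fun Z => ext_inner_right ℝ fun W => ?_ <;>
    simp [hf, inner_add_left, real_inner_smul_left]

theorem exists_bilinear_eq_sub_swap (C : V →ₗ[ℝ] V [⋀^Fin 3]→ₗ[ℝ] ℝ) (Co : V → V → V →ₗ[ℝ] V)
    (hCo : ∀ W X Y Z, ⟪Co W X Y, Z⟫ = C W ![X, Y, Z]) :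
    ∃ D : V →ₗ[ℝ] V →ₗ[ℝ] V →ₗ[ℝ] V, (∀ W X, D W X = Co W X - Co X W) ∧
      ∀ W X, ⟪D W X W, X⟫ = ⟪D W X X, W⟫ := by
  obtain ⟨B, hB⟩ := exists_bilinear_eq_of_inner_eq (f := Co)
    (AlternatingMap.curryLeftLinearMap ∘ₗ C) (by simp [hCo])
  have hrepeat (W X Y : V) : C W ![X, X, Y] = 0 ∧ C W ![X, Y, X] = 0 :=
    ⟨(C W).map_eq_zero_of_eq _ (i := 0) (j := 1) rfl (by decide),
      (C W).map_eq_zero_of_eq _ (i := 0) (j := 2) rfl (by decide)⟩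
  refine ⟨B - B.flip, by simp [hB], fun W X => ?_⟩
  simp [hB, inner_sub_left, hCo, hrepeat]

theorem trace_comp_eq_mul_of_inner_eq_alternating (b : OrthonormalBasis (Fin 4) ℝ V)
    (ν : V [⋀^Fin 4]→ₗ[ℝ] ℝ) {N : V →ₗ[ℝ] V}
    (hN : ∀ Z W, ⟪N Z, W⟫ = ν ![b 2, b 3, Z, W]) (A : V →ₗ[ℝ] V) :
    LinearMap.trace ℝ V (A ∘ₗ N) =
      ν ![b 2, b 3, b 0, b 1] * (⟪A (b 1), b 0⟫ - ⟪A (b 0), b 1⟫) := by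
  have hinj : ∀ p : Fin 4 × Fin 4, p ≠ (0, 1) ∧ p ≠ (1, 0) →
      ¬Function.Injective ![2, 3, p.1, p.2] := by decide
  have hswap : ν ![b 2, b 3, b 1, b 0] = -ν ![b 2, b 3, b 0, b 1] := by
    rw [← ν.map_swap _ (show (2 : Fin 4) ≠ 3 by decide)]
    congr 1
    ext i
    fin_cases i <;> rfl
  rw [trace_comp_eq_sum_inner_mul_inner b, ← Fintype.sum_prod_type',
    Fintype.sum_eq_add (0, 1) (1, 0) (by decide)]
  · simp only [real_inner_comm (N _), real_inner_comm (A _), hN, hswap]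
    ring
  · intro p hp
    have hcomp : ![b 2, b 3, b p.1, b p.2] = b ∘ ![2, 3, p.1, p.2] := by
      ext k
      fin_cases k <;> rfl
    rw [real_inner_comm, hN, hcomp,
      ν.map_eq_zero_of_not_injective _ fun h => hinj p hp h.of_comp, zero_mul]

theorem alternatization_traceComp_eq_zero [FiniteDimensional ℝ V]
    (hdim : Module.finrank ℝ V ≤ 4)
    {D N : V →ₗ[ℝ] V →ₗ[ℝ] V →ₗ[ℝ] V} (hD : ∀ W X, ⟪D W X W, X⟫ = ⟪D W X X, W⟫)
    (ν : V [⋀^Fin 4]→ₗ[ℝ] ℝ) (hN : ∀ X Y Z W, ⟪N X Y Z, W⟫ = ν ![X, Y, Z, W]) :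
    MultilinearMap.alternatization (traceComp D N) = 0 := by
  let b := stdOrthonormalBasis ℝ V
  refine Module.Basis.ext_alternating b.toBasis fun v hv => ?_
  rw [MultilinearMap.alternatization_apply, AlternatingMap.zero_apply]
  refine Finset.sum_eq_zero fun σ _ => ?_
  have hbij : Function.Bijective (v ∘ σ) :=
    (hv.comp σ.injective).bijective_of_nat_card_le (by simpa using hdim)
  let b' := b.reindex (Equiv.ofBijective _ hbij).symm
  have htrace : LinearMap.trace ℝ V (D (b' 0) (b' 1) ∘ₗ N (b' 2) (b' 3)) = 0 := by
    rw [trace_comp_eq_mul_of_inner_eq_alternating b' ν (hN _ _), hD, sub_self, mul_zero]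
  have happly : (traceComp D N).domDomCongr σ (fun i => b.toBasis (v i)) = 0 := by
    simpa [traceComp_apply, b'] using htrace
  rw [happly, smul_zero]

theorem trace_wedge_D_nu_o_eq_zero_general [FiniteDimensional ℝ V]
    (hdim : Module.finrank ℝ V ≤ 4)
    (D : V →ₗ[ℝ] V →ₗ[ℝ] V →ₗ[ℝ] V) (hD : ∀ W X, ⟪D W X W, X⟫ = ⟪D W X X, W⟫)
    (ν : V [⋀^Fin 4]→ₗ[ℝ] ℝ) (νo : V → V → V →ₗ[ℝ] V)
    (hνo : ∀ X Y Z W, ⟪νo X Y Z, W⟫ = 2 * ν ![X, Y, Z, W]) (X : Fin 4 → V) :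
    (1 / 4 : ℝ) * ∑ σ : Equiv.Perm (Fin 4), ((Equiv.Perm.sign σ : ℤ) : ℝ) *
      LinearMap.trace ℝ V (D (X (σ 0)) (X (σ 1)) ∘ₗ νo (X (σ 2)) (X (σ 3))) = 0 := by
  obtain ⟨N, hN⟩ := exists_bilinear_eq_of_inner_eq (f := νo)
    (AlternatingMap.curryLeftLinearMap ∘ₗ ((2 : ℝ) • ν).curryLeft) (by simp [hνo])
  have halt := alternatization_traceComp_eq_zero (N := N) hdim hD ((2 : ℝ) • ν)
    (by simp [hN, hνo])
  have hX := DFunLike.congr_fun halt X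
  simp only [MultilinearMap.alternatization_apply, MultilinearMap.domDomCongr_apply,
    traceComp_apply, hN, AlternatingMap.zero_apply, Units.smul_def, zsmul_eq_mul] at hX
  rw [hX, mul_zero]

end InnerProduct

/-- pointwise form of `tr((d_{∇^{LC}}B_o)·(dB)_o) = 0` in dimension 4. With
`C` a linear map assigning to each `W` an alternating trilinear form `C_W`,
`D(W,X) = (C_W)_o(X) − (C_X)_o(W)`, and `ν_o` built from an alternating 4-form `ν`,
the 4-form `tr(D∧ν_o)` vanishes identically. -/
theorem trace_wedge_D_nu_o_eq_zero
    (V : Type*) [NormedAddCommGroup V] [InnerProductSpace ℝ V]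
    (hdim : Module.finrank ℝ V = 4)
    (C : V →ₗ[ℝ] AlternatingMap ℝ V ℝ (Fin 3))
    (Co : V → V → V →ₗ[ℝ] V)
    (hCo : ∀ W X Y Z : V, ⟪Co W X Y, Z⟫ = 2 * C W ![X, Y, Z])
    (ν : AlternatingMap ℝ V ℝ (Fin 4))
    (νo : V → V → V →ₗ[ℝ] V)
    (hνo : ∀ X Y Z W : V, ⟪νo X Y Z, W⟫ = 2 * ν ![X, Y, Z, W]) :
    ∀ X : Fin 4 → V,
      (1 / 4 : ℝ) * ∑ σ : Equiv.Perm (Fin 4),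
          ((Equiv.Perm.sign σ : ℤ) : ℝ) *
            LinearMap.trace ℝ V
              ((Co (X (σ 0)) (X (σ 1)) - Co (X (σ 1)) (X (σ 0))) ∘ₗ
                νo (X (σ 2)) (X (σ 3))) = 0 := by
  have : FiniteDimensional ℝ V := Module.finite_of_finrank_eq_succ hdim
  obtain ⟨D, hD, hDinner⟩ := exists_bilinear_eq_sub_swap ((2 : ℝ) • C) Co (by simp [hCo])
  simpa [hD] using trace_wedge_D_nu_o_eq_zero_general hdim.le D hDinner ν νo hνo
end

section
/- Let (V, ⟨·,·⟩) be a 4-dimensional real inner product space, B an alternating trilinear form on V, and ν an alternating 4-linear form on V. Let B_o : V → End(V) be determined by ⟨B_o(X)Y, Z⟩ = 2·B(X,Y,Z), let B_o²(X,Y) := B_o(X)∘B_o(Y) − B_o(Y)∘B_o(X), and let ν_o be determined by ⟨ν_o(X,Y)Z, W⟩ = 2·ν(X,Y,Z,W). Then the 4-form tr(B_o²∧ν_o), defined on vectors X₁,…,X₄ by (1/4)·Σ_{σ∈S₄} sgn(σ)·tr( B_o²(X_{σ(1)},X_{σ(2)}) ∘ ν_o(X_{σ(3)},X_{σ(4)})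 ), equals −48·|B|²·ν, where |B|² = Σ_{i<j<k} B(e_i,e_j,e_k)² for any orthonormal basis e₁,…,e₄ of V. -/
/-!
For an orthonormal basis `f`, the endomorphism `ν_o(f₂, f₃)` maps `f₀ ↦ 2 ν(f) f₁`,
`f₁ ↦ -2 ν(f) f₀` and `f₂, f₃ ↦ 0`. Since `B_o(X)` is skew and `B_o(X) Y = -B_o(Y) X`, we have
`⟪X, [B_o(X), B_o(Y)] Y⟫ = -‖B_o(X) Y‖²`. Together these give
`tr([B_o(f₀), B_o(f₁)] ∘ ν_o(f₂, f₃)) = -4 ν(f) ‖B_o(f₀) f₁‖²`.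

Apply this to the permutations of `e`. The sign of the permutation cancels against that of `ν`,
each ordered pair `(eᵢ, eⱼ)` with `i ≠ j` comes from two permutations, and
`∑ᵢⱼ ‖B_o(eᵢ) eⱼ‖² = 4 ∑ᵢⱼₖ B(eᵢ, eⱼ, eₖ)² = 24 |B|²`, so the alternating sum is
`-4 ν(e) · 2 · 24 |B|²`. Both sides of the identity are alternating `4`-forms in dimension `4`,
hence agreement on `e` suffices.
-/

open RealInnerProductSpace

section Sums

variable {A : Type*} [AddCommMonoid A]

theorem sum_perm_apply_zero {n : ℕ} (f : Fin (n + 1) → A) :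
    ∑ σ : Equiv.Perm (Fin (n + 1)), f (σ 0) = n.factorial • ∑ i, f i := by
  rw [← Equiv.Perm.decomposeFin.symm.sum_comp, Fintype.sum_prod_type]
  simp [Fintype.card_perm, Finset.smul_sum]

theorem sum_perm_apply_zero_one {n : ℕ} (h : Fin (n + 2) → Fin (n + 2) → A)
    (hdiag : ∀ i, h i i = 0) :
    ∑ σ : Equiv.Perm (Fin (n + 2)), h (σ 0) (σ 1) = n.factorial • ∑ i, ∑ j, h i j := by
  rw [← Equiv.Perm.decomposeFin.symm.sum_comp, Fintype.sum_prod_type, Finset.smul_sum]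
  refine Finset.sum_congr rfl fun i _ => ?_
  calc ∑ τ : Equiv.Perm (Fin (n + 1)), h (Equiv.Perm.decomposeFin.symm (i, τ) 0)
          (Equiv.Perm.decomposeFin.symm (i, τ) 1)
      = ∑ τ : Equiv.Perm (Fin (n + 1)), h i (Equiv.swap 0 i (τ 0).succ) := by simp
    _ = n.factorial • ∑ j : Fin (n + 1), h i (Equiv.swap 0 i j.succ) :=
        sum_perm_apply_zero fun j => h i (Equiv.swap 0 i j.succ)
    _ = n.factorial • ∑ j, h i (Equiv.swap 0 i j) := by
        simp [Fin.sum_univ_succ (n := n + 1), hdiag]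
    _ = n.factorial • ∑ j, h i j := by rw [Equiv.sum_comp (Equiv.swap 0 i) (h i)]

theorem sum_sum_sum_eq_six_nsmul_sum_Ioi {ι : Type*} [Fintype ι] [LinearOrder ι]
    [LocallyFiniteOrderTop ι] (g : ι → ι → ι → A) (hleft : ∀ i j k, g i j k = g j i k)
    (hright : ∀ i j k, g i j k = g i k j) (hdiag : ∀ i j, g i i j = 0) :
    ∑ i, ∑ j, ∑ k, g i j k = 6 • ∑ i, ∑ j ∈ Finset.Ioi i, ∑ k ∈ Finset.Ioi j, g i j k := by
  let F (i j k : ι) : A := if i < j ∧ j < k then g i j k else 0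
  have sum_F :
      ∑ i, ∑ j ∈ Finset.Ioi i, ∑ k ∈ Finset.Ioi j, g i j k = ∑ i, ∑ j, ∑ k, F i j k := by
    simp only [F, ← Finset.filter_lt_eq_Ioi, Finset.sum_filter, ite_and, Finset.sum_ite_irrel,
      Finset.sum_const_zero]
  have split (i j k : ι) :
      g i j k = F i j k + F j i k + F i k j + F j k i + F k i j + F k j i := by
    grind
  have swap_left (f : ι → ι → ι → A) : ∑ i, ∑ j, ∑ k, f j i k = ∑ i, ∑ j, ∑ k, f i j k :=
    Finset.sum_comm
  have swap_right (f : ι → ι → ι → A) : ∑ i, ∑ j, ∑ k, f i k j = ∑ i, ∑ j, ∑ k, f i j k :=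
    Finset.sum_congr rfl fun _ _ => Finset.sum_comm
  have rotate_left (f : ι → ι → ι → A) : ∑ i, ∑ j, ∑ k, f j k i = ∑ i, ∑ j, ∑ k, f i j k :=
    (swap_left fun i j k => f i k j).trans (swap_right f)
  have rotate_right (f : ι → ι → ι → A) : ∑ i, ∑ j, ∑ k, f k i j = ∑ i, ∑ j, ∑ k, f i j k :=
    (swap_right fun i j k => f j i k).trans (swap_left f)
  have reverse (f : ι → ι → ι → A) : ∑ i, ∑ j, ∑ k, f k j i = ∑ i, ∑ j, ∑ k, f i j k :=
    (swap_left fun i j k => f k i j).trans (rotate_right f)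
  calc ∑ i, ∑ j, ∑ k, g i j k
      = ∑ i, ∑ j, ∑ k, (F i j k + F j i k + F i k j + F j k i + F k i j + F k j i) :=
        Finset.sum_congr rfl fun i _ => Finset.sum_congr rfl fun j _ =>
          Finset.sum_congr rfl fun k _ => split i j k
    _ = 6 • ∑ i, ∑ j, ∑ k, F i j k := by
        simp only [Finset.sum_add_distrib]
        rw [swap_left F, swap_right F, rotate_left F, rotate_right F, reverse F]
        abel
    _ = 6 • ∑ i, ∑ j ∈ Finset.Ioi i, ∑ k ∈ Finset.Ioi j, g i j k := by rw [sum_F]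

end Sums

theorem alternatingMap_ext_of_basis {R M ι : Type*} [CommRing R] [AddCommGroup M] [Module R M]
    [Finite ι] (e : Module.Basis ι R M) {ω η : M [⋀^ι]→ₗ[R] R} (h : ω e = η e) : ω = η := by
  classical
  cases nonempty_fintype ι
  rw [ω.eq_smul_basis_det e, η.eq_smul_basis_det e, h]

section AlternatingMap

variable {R M N : Type*} [Semiring R] [AddCommMonoid M] [Module R M]

section AddCommMonoid

variable [AddCommMonoid N] [Module R N]

theorem isLinearMap_vecCons {n : ℕ} (ω : M [⋀^Fin (n + 1)]→ₗ[R] N) (m : Fin n → M) :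
    IsLinearMap R fun x => ω (Matrix.vecCons x m) :=
  ⟨ω.map_vecCons_add m, ω.map_vecCons_smul m⟩

theorem threeForm_self_left (B : M [⋀^Fin 3]→ₗ[R] N) (x y : M) : B ![x, x, y] = 0 :=
  B.map_eq_zero_of_eq _ (i := 0) (j := 1) rfl (by decide)

end AddCommMonoid

variable [AddCommGroup N] [Module R N]

theorem threeForm_swap_left (B : M [⋀^Fin 3]→ₗ[R] N) (x y z : M) :
    B ![y, x, z] = -B ![x, y, z] := by
  rw [← B.map_swap ![x, y, z] (i := 0) (j := 1) (by decide)]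
  congr 1
  ext i
  fin_cases i <;> rfl

theorem threeForm_swap_right (B : M [⋀^Fin 3]→ₗ[R] N) (x y z : M) :
    B ![x, z, y] = -B ![x, y, z] := by
  rw [← B.map_swap ![x, y, z] (i := 1) (j := 2) (by decide)]
  congr 1
  ext i
  fin_cases i <;> rfl

end AlternatingMap

theorem isLinearMap_of_inner {𝕜 W M E : Type*} [RCLike 𝕜] [AddCommMonoid W] [Module 𝕜 W]
    [AddCommMonoid M] [Module 𝕜 M] [NormedAddCommGroup E] [InnerProductSpace 𝕜 E]
    {T : W → M →ₗ[𝕜] E} (hT : ∀ y z, IsLinearMap 𝕜 fun w => inner 𝕜 z (T w y)) :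
    IsLinearMap 𝕜 T where
  map_add w w' := LinearMap.ext fun y => ext_inner_left 𝕜 fun z => by
    simpa [inner_add_right] using (hT y z).map_add w w'
  map_smul c w := LinearMap.ext fun y => ext_inner_left 𝕜 fun z => by
    simpa [inner_smul_right] using (hT y z).map_smul c w

section TraceWedge

variable {R M E : Type*} [CommRing R] [AddCommMonoid M] [Module R M] [AddCommGroup E]
  [Module R E]

/-- The `4`-form `4 tr(α ∧ β)` for `End(E)`-valued bilinear maps `α` and `β`, that is, the
alternatization of `tr(α ∘ β)`; without the normalizing factor `1/4` it makes sense over any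
commutative ring. -/
noncomputable def traceWedge (α β : M →ₗ[R] M →ₗ[R] Module.End R E) : M [⋀^Fin 4]→ₗ[R] R :=
  MultilinearMap.alternatization <|
    MultilinearMap.mk' (fun X => LinearMap.trace R E (α (X 0) (X 1) * β (X 2) (X 3)))
      (fun X i x y => by fin_cases i <;> simp [add_mul, mul_add])
      (fun X i c x => by fin_cases i <;> simp)

theorem traceWedge_apply (α β : M →ₗ[R] M →ₗ[R] Module.End R E) (X : Fin 4 → M) :
    traceWedge α β X = ∑ σ : Equiv.Perm (Fin 4), ((Equiv.Perm.sign σ : ℤ) : R) *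
      LinearMap.trace R E (α (X (σ 0)) (X (σ 1)) ∘ₗ β (X (σ 2)) (X (σ 3))) := by
  simp only [traceWedge, MultilinearMap.alternatization_apply, Units.smul_def, zsmul_eq_mul]
  rfl

/-- The bilinear map `(x, y) ↦ [P x, P y]`; for `P = B_o` it is the `2`-form `B_o²`. -/
def commutatorForm (P : M →ₗ[R] Module.End R E) : M →ₗ[R] M →ₗ[R] Module.End R E :=
  let PP := (LinearMap.mul R (Module.End R E)).compl₁₂ P P
  PP - PP.flip

end TraceWedge

section InnerProductSpace

variable {V : Type*} [NormedAddCommGroup V] [InnerProductSpace ℝ V]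

section ThreeForm

variable {B : V [⋀^Fin 3]→ₗ[ℝ] ℝ} {Bo : V → V →ₗ[ℝ] V}

theorem isLinearMap_Bo (hBo : ∀ X Y Z : V, ⟪Bo X Y, Z⟫ = 2 * B ![X, Y, Z]) :
    IsLinearMap ℝ Bo :=
  isLinearMap_of_inner fun Y Z => by
    simp only [fun X => real_inner_comm (Bo X Y) Z, hBo]
    exact isLinearMap_vecCons ((2 : ℝ) • B) ![Y, Z]

theorem Bo_apply_self (hBo : ∀ X Y Z : V, ⟪Bo X Y, Z⟫ = 2 * B ![X, Y, Z]) (X : V) :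
    Bo X X = 0 :=
  ext_inner_right ℝ fun Z => by
    rw [hBo, threeForm_self_left, mul_zero, inner_zero_left]

theorem Bo_swap (hBo : ∀ X Y Z : V, ⟪Bo X Y, Z⟫ = 2 * B ![X, Y, Z]) (X Y : V) :
    Bo Y X = -Bo X Y :=
  ext_inner_right ℝ fun Z => by
    rw [hBo, inner_neg_left, hBo, threeForm_swap_left, mul_neg]

theorem inner_Bo_right (hBo : ∀ X Y Z : V, ⟪Bo X Y, Z⟫ = 2 * B ![X, Y, Z]) (X Y Z : V) :
    ⟪Y, Bo X Z⟫ = -⟪Bo X Y, Z⟫ := by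
  rw [real_inner_comm, hBo, hBo, threeForm_swap_right, mul_neg]

theorem inner_commutator_Bo (hBo : ∀ X Y Z : V, ⟪Bo X Y, Z⟫ = 2 * B ![X, Y, Z]) (X Y : V) :
    ⟪X, (Bo X ∘ₗ Bo Y - Bo Y ∘ₗ Bo X) Y⟫ = -‖Bo X Y‖ ^ 2 :=
  calc ⟪X, (Bo X ∘ₗ Bo Y - Bo Y ∘ₗ Bo X) Y⟫
      = -⟪X, Bo Y (Bo X Y)⟫ := by simp [Bo_apply_self hBo]
    _ = ⟪Bo Y X, Bo X Y⟫ := by rw [inner_Bo_right hBo, neg_neg]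
    _ = -‖Bo X Y‖ ^ 2 := by rw [Bo_swap hBo X Y, inner_neg_left, real_inner_self_eq_norm_sq]

theorem sum_norm_sq_Bo (hBo : ∀ X Y Z : V, ⟪Bo X Y, Z⟫ = 2 * B ![X, Y, Z]) {ι : Type*}
    [Fintype ι] [LinearOrder ι] [LocallyFiniteOrderTop ι] (e : OrthonormalBasis ι ℝ V) :
    ∑ i, ∑ j, ‖Bo (e i) (e j)‖ ^ 2 =
      24 * ∑ i, ∑ j ∈ Finset.Ioi i, ∑ k ∈ Finset.Ioi j, B ![e i, e j, e k] ^ 2 :=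
  calc ∑ i, ∑ j, ‖Bo (e i) (e j)‖ ^ 2
      = ∑ i, ∑ j, ∑ k, (2 * B ![e i, e j, e k]) ^ 2 := by
        simp only [← e.sum_sq_inner_left, hBo]
    _ = 4 * ∑ i, ∑ j, ∑ k, B ![e i, e j, e k] ^ 2 := by
        simp only [mul_pow, ← Finset.mul_sum]
        norm_num
    _ = 4 * (6 • ∑ i, ∑ j ∈ Finset.Ioi i, ∑ k ∈ Finset.Ioi j, B ![e i, e j, e k] ^ 2) := by
        rw [sum_sum_sum_eq_six_nsmul_sum_Ioi fun i j k => B ![e i, e j, e k] ^ 2]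
        · exact fun i j k => by rw [threeForm_swap_left, neg_sq]
        · exact fun i j k => by rw [threeForm_swap_right, neg_sq]
        · exact fun i j => by rw [threeForm_self_left, zero_pow two_ne_zero]
    _ = 24 * ∑ i, ∑ j ∈ Finset.Ioi i, ∑ k ∈ Finset.Ioi j, B ![e i, e j, e k] ^ 2 := by
        rw [nsmul_eq_mul]
        ring

end ThreeForm

section FourForm

variable {ν : V [⋀^Fin 4]→ₗ[ℝ] ℝ} {νo : V → V → V →ₗ[ℝ] V}

theorem isLinearMap_νo_right (hνo : ∀ X Y Z W : V, ⟪νo X Y Z, W⟫ = 2 * ν ![X, Y, Z, W])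
    (X : V) : IsLinearMap ℝ (νo X) :=
  isLinearMap_of_inner fun Z W => by
    simp only [fun Y => real_inner_comm (νo X Y Z) W, hνo]
    exact isLinearMap_vecCons ((2 : ℝ) • ν.curryLeft X) ![Z, W]

theorem isLinearMap_νo_left (hνo : ∀ X Y Z W : V, ⟪νo X Y Z, W⟫ = 2 * ν ![X, Y, Z, W])
    (Y : V) : IsLinearMap ℝ fun X => νo X Y :=
  isLinearMap_of_inner fun Z W => by
    simp only [fun X => real_inner_comm (νo X Y Z) W, hνo]
    exact isLinearMap_vecCons ((2 : ℝ) • ν) ![Y, Z, W]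

theorem νo_apply_left (hνo : ∀ X Y Z W : V, ⟪νo X Y Z, W⟫ = 2 * ν ![X, Y, Z, W]) (X Y : V) :
    νo X Y X = 0 :=
  ext_inner_right ℝ fun W => by
    rw [hνo, ν.map_eq_zero_of_eq _ (i := 0) (j := 2) rfl (by decide), mul_zero, inner_zero_left]

theorem νo_apply_right (hνo : ∀ X Y Z W : V, ⟪νo X Y Z, W⟫ = 2 * ν ![X, Y, Z, W]) (X Y : V) :
    νo X Y Y = 0 :=
  ext_inner_right ℝ fun W => by
    rw [hνo, ν.map_eq_zero_of_eq _ (i := 1) (j := 2) rfl (by decide), mul_zero, inner_zero_left]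

theorem νo_apply_basis_zero (hνo : ∀ X Y Z W : V, ⟪νo X Y Z, W⟫ = 2 * ν ![X, Y, Z, W])
    (f : OrthonormalBasis (Fin 4) ℝ V) : νo (f 2) (f 3) (f 0) = (2 * ν f) • f 1 := by
  have sign_eq_one : Equiv.Perm.sign (Equiv.swap (0 : Fin 4) 2 * Equiv.swap 1 3) = 1 := by decide
  have ν_apply (k : Fin 4) : ν ![f 2, f 3, f 0, f k] = if k = 1 then ν f else 0 := by
    fin_cases k
    · exact ν.map_eq_zero_of_eq _ (i := 2) (j := 3) rfl (by decide)
    · rw [← one_smul ℤˣ (ν f), ← sign_eq_one, ← ν.map_perm]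
      congr 1
      ext i
      fin_cases i <;> rfl
    · exact ν.map_eq_zero_of_eq _ (i := 0) (j := 3) rfl (by decide)
    · exact ν.map_eq_zero_of_eq _ (i := 1) (j := 3) rfl (by decide)
  refine InnerProductSpace.ext_inner_right_basis f.toBasis fun k => ?_
  rw [f.coe_toBasis, hνo, ν_apply, real_inner_smul_left, f.inner_eq_ite]
  simp only [mul_ite, mul_one, mul_zero, eq_comm]

theorem νo_apply_basis_one (hνo : ∀ X Y Z W : V, ⟪νo X Y Z, W⟫ = 2 * ν ![X, Y, Z, W])
    (f : OrthonormalBasis (Fin 4) ℝ V) : νo (f 2) (f 3) (f 1) = -(2 * ν f) • f 0 := by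
  have h := νo_apply_basis_zero hνo (f.reindex (Equiv.swap 0 1))
  rw [f.coe_reindex, Equiv.symm_swap, ν.map_swap _ (by decide)] at h
  have swap_two : Equiv.swap (0 : Fin 4) 1 2 = 2 := by decide
  have swap_three : Equiv.swap (0 : Fin 4) 1 3 = 3 := by decide
  simpa [swap_two, swap_three] using h

theorem trace_comp_νo (hνo : ∀ X Y Z W : V, ⟪νo X Y Z, W⟫ = 2 * ν ![X, Y, Z, W])
    (f : OrthonormalBasis (Fin 4) ℝ V) (S : V →ₗ[ℝ] V) :
    LinearMap.trace ℝ V (S ∘ₗ νo (f 2) (f 3)) =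
      2 * ν f * (⟪f 0, S (f 1)⟫ - ⟪f 1, S (f 0)⟫) := by
  rw [LinearMap.trace_eq_sum_inner _ f]
  simp only [Fin.sum_univ_four, LinearMap.comp_apply, νo_apply_basis_zero hνo,
    νo_apply_basis_one hνo, νo_apply_left hνo, νo_apply_right hνo, map_smul, map_zero,
    inner_smul_right, inner_zero_right]
  ring

end FourForm

section TraceFormula

variable {B : V [⋀^Fin 3]→ₗ[ℝ] ℝ} {Bo : V → V →ₗ[ℝ] V}
  {ν : V [⋀^Fin 4]→ₗ[ℝ] ℝ} {νo : V → V → V →ₗ[ℝ] V}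

theorem trace_commutator_Bo_comp_νo (hBo : ∀ X Y Z : V, ⟪Bo X Y, Z⟫ = 2 * B ![X, Y, Z])
    (hνo : ∀ X Y Z W : V, ⟪νo X Y Z, W⟫ = 2 * ν ![X, Y, Z, W])
    (f : OrthonormalBasis (Fin 4) ℝ V) :
    LinearMap.trace ℝ V
        ((Bo (f 0) ∘ₗ Bo (f 1) - Bo (f 1) ∘ₗ Bo (f 0)) ∘ₗ νo (f 2) (f 3)) =
      -4 * ν f * ‖Bo (f 0) (f 1)‖ ^ 2 := by
  have h : ⟪f 1, (Bo (f 0) ∘ₗ Bo (f 1) - Bo (f 1) ∘ₗ Bo (f 0)) (f 0)⟫ =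
      ‖Bo (f 0) (f 1)‖ ^ 2 := by
    rw [← neg_sub, LinearMap.neg_apply, inner_neg_right, inner_commutator_Bo hBo, neg_neg,
      Bo_swap hBo, norm_neg]
  rw [trace_comp_νo hνo, inner_commutator_Bo hBo, h]
  ring

theorem sum_sign_mul_trace_basis (hBo : ∀ X Y Z : V, ⟪Bo X Y, Z⟫ = 2 * B ![X, Y, Z])
    (hνo : ∀ X Y Z W : V, ⟪νo X Y Z, W⟫ = 2 * ν ![X, Y, Z, W])
    (e : OrthonormalBasis (Fin 4) ℝ V) :
    ∑ σ : Equiv.Perm (Fin 4), ((Equiv.Perm.sign σ : ℤ) : ℝ) *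
        LinearMap.trace ℝ V
          ((Bo (e (σ 0)) ∘ₗ Bo (e (σ 1)) - Bo (e (σ 1)) ∘ₗ Bo (e (σ 0))) ∘ₗ
            νo (e (σ 2)) (e (σ 3))) =
      -192 * (∑ i, ∑ j ∈ Finset.Ioi i, ∑ k ∈ Finset.Ioi j, B ![e i, e j, e k] ^ 2) * ν e := by
  have term (σ : Equiv.Perm (Fin 4)) : ((Equiv.Perm.sign σ : ℤ) : ℝ) *
        LinearMap.trace ℝ V
          ((Bo (e (σ 0)) ∘ₗ Bo (e (σ 1)) - Bo (e (σ 1)) ∘ₗ Bo (e (σ 0))) ∘ₗ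
            νo (e (σ 2)) (e (σ 3))) =
      -4 * ν e * ‖Bo (e (σ 0)) (e (σ 1))‖ ^ 2 := by
    have sign_sq : ((Equiv.Perm.sign σ : ℤ) : ℝ) * (Equiv.Perm.sign σ : ℤ) = 1 := by
      exact_mod_cast Int.units_coe_mul_self (Equiv.Perm.sign σ)
    have h := trace_commutator_Bo_comp_νo hBo hνo (e.reindex σ.symm)
    rw [e.coe_reindex, Equiv.symm_symm, ν.map_perm, Units.smul_def, zsmul_eq_mul] at h
    simp only [Function.comp_apply] at h
    rw [h]
    linear_combination -4 * ν e * ‖Bo (e (σ 0)) (e (σ 1))‖ ^ 2 * sign_sq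
  have sum_perm := sum_perm_apply_zero_one (fun i j => ‖Bo (e i) (e j)‖ ^ 2) fun i => by
    rw [Bo_apply_self hBo, norm_zero, zero_pow two_ne_zero]
  rw [Finset.sum_congr rfl fun σ _ => term σ, ← Finset.mul_sum, sum_perm, sum_norm_sq_Bo hBo,
    nsmul_eq_mul, Nat.factorial_two]
  push_cast
  ring

end TraceFormula

end InnerProductSpace

/-- `tr(B_o²·(dB)_o) = −48|B|²·dB` in dimension 4. For an alternating
trilinear form `B` and alternating 4-form `ν` on a 4-dimensional real inner product space,
with `B_o`, `ν_o` as usual and `B_o²(X,Y) = [B_o(X), B_o(Y)]`, the 4-form `tr(B_o²∧ν_o)`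
equals `−48·|B|²·ν`, where `|B|² = Σ_{i<j<k} B(e_i,e_j,e_k)²`. -/
theorem trace_wedge_Bo_sq_nu_o
    (V : Type*) [NormedAddCommGroup V] [InnerProductSpace ℝ V]
    (hdim : Module.finrank ℝ V = 4)
    (B : AlternatingMap ℝ V ℝ (Fin 3))
    (Bo : V → V →ₗ[ℝ] V)
    (hBo : ∀ X Y Z : V, ⟪Bo X Y, Z⟫ = 2 * B ![X, Y, Z])
    (ν : AlternatingMap ℝ V ℝ (Fin 4))
    (νo : V → V → V →ₗ[ℝ] V)
    (hνo : ∀ X Y Z W : V, ⟪νo X Y Z, W⟫ = 2 * ν ![X, Y, Z, W])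
    (e : OrthonormalBasis (Fin 4) ℝ V) :
    ∀ X : Fin 4 → V,
      (1 / 4 : ℝ) * ∑ σ : Equiv.Perm (Fin 4),
          ((Equiv.Perm.sign σ : ℤ) : ℝ) *
            LinearMap.trace ℝ V
              ((Bo (X (σ 0)) ∘ₗ Bo (X (σ 1)) - Bo (X (σ 1)) ∘ₗ Bo (X (σ 0))) ∘ₗ
                νo (X (σ 2)) (X (σ 3))) =
        -48 * (∑ i : Fin 4, ∑ j ∈ Finset.Ioi i, ∑ k ∈ Finset.Ioi j,
            B ![e i, e j, e k] ^ 2) * ν X := by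
  intro X
  let P := (isLinearMap_Bo hBo).mk'
  let N := LinearMap.mk₂ ℝ νo
    (fun X X' Y => (isLinearMap_νo_left hνo Y).map_add X X')
    (fun c X Y => (isLinearMap_νo_left hνo Y).map_smul c X)
    (fun X => (isLinearMap_νo_right hνo X).map_add)
    (fun c X => (isLinearMap_νo_right hνo X).map_smul c)
  let normSq := ∑ i, ∑ j ∈ Finset.Ioi i, ∑ k ∈ Finset.Ioi j, B ![e i, e j, e k] ^ 2
  have forms_eq : traceWedge (commutatorForm P) N = (-192 * normSq) • ν :=
    alternatingMap_ext_of_basis e.toBasis <| by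
      rw [e.coe_toBasis, traceWedge_apply]
      exact sum_sign_mul_trace_basis hBo hνo e
  have sum_eq := (traceWedge_apply _ _ X).symm.trans (congrArg (· X) forms_eq)
  calc _ = 1 / 4 * ((-192 * normSq) * ν X) := congrArg (1 / 4 * ·) sum_eq
    _ = -48 * normSq * ν X := by ring
end
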